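/- The level-two series 𝒫̃ can be expressed through 𝒫 and the Eisenstein series E₂: for every τ ∈ ℍ, 𝒫̃(τ) = (3/2)𝒫(τ) − (1/2)E₂(τ). -/

import Mathlib

open Complex

noncomputable section

/-- `q = e^{2πiτ}`. -/
def qq (τ : ℂ) : ℂ := Complex.exp (2 * Real.pi * Complex.I * τ)

/-- Sum of the `k`-th powers of the positive divisors of `n`. -/
def sigma' (k n : ℕ) : ℕ := ∑ d ∈ n.divisors, d ^ k

/-- The Eisenstein series `E₂`. -/
def E2 : ℂ → ℂ := fun τ => 1 - 24 * ∑' n : ℕ, (sigma' 1 (n + 1) : ℂ) * qq τ ^ (n + 1)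

/-- The level-two Eisenstein series `𝒫(τ) = 1 − 8 Σ_{n≥1} (−1)ⁿ n qⁿ/(1−qⁿ)`. -/
def EP : ℂ → ℂ := fun τ =>
  1 - 8 * ∑' n : ℕ, (-1 : ℂ) ^ (n + 1) * ((n : ℂ) + 1) * qq τ ^ (n + 1) / (1 - qq τ ^ (n + 1))

/-- The level-two modular form `𝒫̃(τ) = 1 + 24 Σ_{n≥1} n qⁿ/(1+qⁿ)`. -/
def EPt : ℂ → ℂ := fun τ =>
  1 + 24 * ∑' n : ℕ, ((n : ℂ) + 1) * qq τ ^ (n + 1) / (1 + qq τ ^ (n + 1))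

/- Put `L n = n ^ k * q ^ n / (1 - q ^ n)`. The partial fraction identity
`x / (1 + x) = x / (1 - x) - 2 * (x ^ 2 / (1 - x ^ 2))` at `x = q ^ n` gives
`2 ^ k * (n ^ k * q ^ n / (1 + q ^ n)) = 2 ^ k * L n - 2 * L (2 * n)`, since replacing `n` by
`2 * n` multiplies `n ^ k` by `2 ^ k`. On the other hand, the sum of `(-1) ^ n * L n` is twice the
sum of `L (2 * n)` minus the sum of `L n`, so the sum over even indices can be eliminated. For
`k = 1`, the sum of `L n` is the sum of `σ 1 n * q ^ n`, which is the series in `E2`. -/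

section AlternatingSum

variable {R : Type*} [Ring R] [UniformSpace R] [IsUniformAddGroup R] [CompleteSpace R]
  [T2Space R] {f : ℕ → R}

lemma tsum_neg_one_pow_mul (hf : Summable f) :
    ∑' n, (-1) ^ n * f n = 2 * ∑' n, f (2 * n) - ∑' n, f n := by
  have heven : Summable fun n ↦ f (2 * n) :=
    hf.comp_injective (mul_right_injective₀ two_ne_zero)
  have hodd : Summable fun n ↦ f (2 * n + 1) :=
    hf.comp_injective ((add_left_injective 1).comp (mul_right_injective₀ two_ne_zero))
  have hsum : ∑' n, f (2 * n) + ∑' n, f (2 * n + 1) = ∑' n, f n := tsum_even_add_odd heven hodd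
  have halt : ∑' n, f (2 * n) - ∑' n, f (2 * n + 1) = ∑' n, (-1) ^ n * f n := by
    have h := tsum_even_add_odd (f := fun n ↦ (-1) ^ n * f n)
      (by simpa [pow_mul] using heven) (by simpa [pow_mul, pow_succ] using hodd.neg)
    simpa [pow_mul, pow_succ, tsum_neg, sub_eq_add_neg] using h
  rw [← halt, ← hsum, two_mul]
  abel

lemma tsum_pnat_neg_one_pow_mul (hf : Summable f) :
    ∑' n : ℕ+, (-1) ^ (n : ℕ) * f n = 2 * ∑' n : ℕ+, f (2 * n) - ∑' n : ℕ+, f n := by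
  have heven : Summable fun n ↦ f (2 * n) :=
    hf.comp_injective (mul_right_injective₀ two_ne_zero)
  have h := tsum_neg_one_pow_mul hf
  rw [← tsum_zero_pnat_eq_tsum_nat hf.alternating, ← tsum_zero_pnat_eq_tsum_nat heven,
    ← tsum_zero_pnat_eq_tsum_nat hf, pow_zero, one_mul, mul_zero, mul_add, two_mul (f 0)] at h
  refine add_left_cancel (a := f 0) ?_
  rw [h]
  abel

end AlternatingSum

lemma div_one_add_eq_div_one_sub_sub {K : Type*} [Field K] {x : K}
    (hsub : 1 - x ≠ 0) (hadd : 1 + x ≠ 0) :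
    x / (1 + x) = x / (1 - x) - 2 * (x ^ 2 / (1 - x ^ 2)) := by
  have hfactor : 1 - x ^ 2 = (1 - x) * (1 + x) := by ring
  rw [hfactor]
  field_simp
  ring

/-- The `n`-th term `n ^ k * r ^ n / (1 - r ^ n)` of the Lambert series whose power series
expansion in `r` has the coefficients `σ k n`. The series runs over `n : ℕ+`; at `n = 0` division
by zero gives the junk value `0`. -/
def lambertTerm {K : Type*} [DivisionRing K] (k : ℕ) (r : K) (n : ℕ) : K :=
  n ^ k * r ^ n / (1 - r ^ n)

lemma two_pow_mul_pow_mul_pow_div_one_add {K : Type*} [NormedField K] {r : K} (k : ℕ)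
    (hr : ‖r‖ < 1) {n : ℕ} (hn : n ≠ 0) :
    2 ^ k * (n ^ k * r ^ n / (1 + r ^ n)) =
      2 ^ k * lambertTerm k r n - 2 * lambertTerm k r (2 * n) := by
  have hrn : ‖r ^ n‖ < 1 := by simpa using pow_lt_one₀ (norm_nonneg r) hr hn
  have hsub : 1 - r ^ n ≠ 0 := (isUnit_one_sub_of_norm_lt_one hrn).ne_zero
  have hadd : 1 + r ^ n ≠ 0 := by
    simpa using (isUnit_one_sub_of_norm_lt_one (x := -r ^ n) (by rwa [norm_neg])).ne_zero
  rw [lambertTerm, lambertTerm, mul_comm 2 n, pow_mul r]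
  push_cast
  linear_combination (2 ^ k * n ^ k : K) * div_one_add_eq_div_one_sub_sub hsub hadd

section Lambert

variable {𝕜 : Type*} [NontriviallyNormedField 𝕜] [CompleteSpace 𝕜] {r : 𝕜}

lemma summable_lambertTerm (k : ℕ) (hr : ‖r‖ < 1) : Summable (lambertTerm k r) :=
  summable_norm_pow_mul_geometric_div_one_sub k hr

theorem two_pow_mul_tsum_pnat_pow_mul_pow_div_one_add (k : ℕ) (hr : ‖r‖ < 1) :
    2 ^ k * ∑' n : ℕ+, (n : 𝕜) ^ k * r ^ (n : ℕ) / (1 + r ^ (n : ℕ)) =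
      (2 ^ k - 1) * ∑' n : ℕ+, lambertTerm k r n -
        ∑' n : ℕ+, (-1) ^ (n : ℕ) * lambertTerm k r n := by
  have hL : Summable (lambertTerm k r) := summable_lambertTerm k hr
  have hall : Summable fun n : ℕ+ ↦ lambertTerm k r n := hL.comp_injective PNat.coe_injective
  have heven : Summable fun n : ℕ+ ↦ lambertTerm k r (2 * n) :=
    hL.comp_injective ((mul_right_injective₀ two_ne_zero).comp PNat.coe_injective)
  calc 2 ^ k * ∑' n : ℕ+, (n : 𝕜) ^ k * r ^ (n : ℕ) / (1 + r ^ (n : ℕ))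
      = ∑' n : ℕ+, (2 ^ k * lambertTerm k r n - 2 * lambertTerm k r (2 * n)) := by
        rw [← tsum_mul_left]
        exact tsum_congr fun n ↦ two_pow_mul_pow_mul_pow_div_one_add k hr n.ne_zero
    _ = 2 ^ k * ∑' n : ℕ+, lambertTerm k r n - 2 * ∑' n : ℕ+, lambertTerm k r (2 * n) := by
        rw [(hall.mul_left _).tsum_sub (heven.mul_left _), tsum_mul_left, tsum_mul_left]
    _ = _ := by
        rw [tsum_pnat_neg_one_pow_mul hL]
        ring

end Lambert

lemma norm_qq_lt_one {τ : ℂ} (hτ : 0 < τ.im) : ‖qq τ‖ < 1 :=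
  UpperHalfPlane.norm_exp_two_pi_I_lt_one ⟨τ, hτ⟩

lemma E2_eq_one_sub_tsum_lambertTerm {τ : ℂ} (hτ : 0 < τ.im) :
    E2 τ = 1 - 24 * ∑' n : ℕ+, lambertTerm 1 (qq τ) n := by
  have hsigma : ∑' n : ℕ+, lambertTerm 1 (qq τ) n = ∑' n : ℕ+, (sigma' 1 n : ℂ) * qq τ ^ (n : ℕ) :=
    tsum_pow_div_one_sub_eq_tsum_sigma (norm_qq_lt_one hτ) 1
  rw [hsigma, tsum_pnat_eq_tsum_succ (f := fun n ↦ (sigma' 1 n : ℂ) * qq τ ^ n), E2]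

lemma EP_eq_one_sub_tsum_lambertTerm (τ : ℂ) :
    EP τ = 1 - 8 * ∑' n : ℕ+, (-1) ^ (n : ℕ) * lambertTerm 1 (qq τ) n := by
  rw [tsum_pnat_eq_tsum_succ (f := fun n ↦ (-1) ^ n * lambertTerm 1 (qq τ) n)]
  simp only [EP, lambertTerm, pow_one, Nat.cast_add_one, mul_div_assoc, mul_assoc]

lemma EPt_eq_one_add_tsum_pnat (τ : ℂ) :
    EPt τ = 1 + 24 * ∑' n : ℕ+, (n : ℂ) * qq τ ^ (n : ℕ) / (1 + qq τ ^ (n : ℕ)) := by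
  rw [tsum_pnat_eq_tsum_succ (f := fun n ↦ (n : ℂ) * qq τ ^ n / (1 + qq τ ^ n))]
  simp only [EPt, Nat.cast_add_one]

/-- `𝒫̃ = (3/2)𝒫 − (1/2)E₂` on the upper half-plane. -/
theorem EPt_eq_EP_E2 :
    ∀ τ : ℂ, 0 < τ.im → EPt τ = (3 / 2) * EP τ - (1 / 2) * E2 τ := by
  intro τ hτ
  rw [EPt_eq_one_add_tsum_pnat, EP_eq_one_sub_tsum_lambertTerm, E2_eq_one_sub_tsum_lambertTerm hτ]
  have h := two_pow_mul_tsum_pnat_pow_mul_pow_div_one_add 1 (norm_qq_lt_one hτ)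
  simp only [pow_one] at h
  linear_combination 12 * h
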